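/- arXiv:0704.0588 — 2 statements merged into one kernel-verified Lean document; each statement's English description precedes it below -/
import Mathlib

section
/- Let p be a probability measure on a finite set Y. For δ > 0, define Δ(p;N,δ) as the set of sequences y ∈ Y^N with |ν_y(t) − p(t)| < δ for all t ∈ Y. Then for each fixed δ > 0, the limit as N → ∞ of (1/N) log #Δ(p;N,δ) exists and equals sup{S(q) : q a probability measure on Y with |q(t) − p(t)| < δ for all t ∈ Y}. -/
open Filter

/-!
A product weight of a sequence depends on the sequence only through its type:
`∏ j, q (y j) = exp (n * ∑ t, ν_y t * log (q t))` when `q` is positive on the values of `y`.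

With `q = ν_y` this shows that the sequences of a given type `q` number at most `exp (n * S q)`;
as there are at most `(n + 1) ^ #Y` types, this bounds the growth rate from above. Conversely, if
`q` lies in an open set `U` and `s < S q`, then by the weak law of large numbers a `q`-random
sequence has, with probability tending to `1`, a type in `U` so close to `q` that the weight of the
sequence is at most `exp (-n * s)`; so at least about `exp (n * s)` sequences have their type
in `U`.
-/

open MeasureTheory ProbabilityTheory Finset
open scoped Topology

section EmpiricalType

variable {ι Y : Type*} [Fintype ι] [DecidableEq Y]

/-- The type `ν_y` of a finite sequence `y`: the proportion of indices at which `y` takes the value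
`t`, as a function of `t`. It is the zero function for the empty sequence. -/
noncomputable def empiricalType (y : ι → Y) (t : Y) : ℝ :=
  #{j | y j = t} / Fintype.card ι

lemma empiricalType_nonneg (y : ι → Y) (t : Y) : 0 ≤ empiricalType y t := by
  unfold empiricalType
  positivity

lemma empiricalType_apply_self_pos (y : ι → Y) (j : ι) : 0 < empiricalType y (y j) := by
  have : Nonempty ι := ⟨j⟩
  have : 0 < #{i | y i = y j} := card_pos.2 ⟨j, by simp⟩
  unfold empiricalType
  positivity

lemma empiricalType_eq_sum_div (y : ι → Y) (t : Y) :
    empiricalType y t = (∑ j, Set.indicator {t} 1 (y j)) / Fintype.card ι := by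
  simp [empiricalType, Set.indicator_apply]

variable [Fintype Y]

lemma sum_comp_eq_card_mul_sum_empiricalType (f : Y → ℝ) (y : ι → Y) :
    ∑ j, f (y j) = Fintype.card ι * ∑ t, empiricalType y t * f t := by
  rcases isEmpty_or_nonempty ι with _ | _
  · simp
  · rw [← sum_fiberwise' univ y f, mul_sum]
    refine sum_congr rfl fun t _ => ?_
    rw [sum_const, nsmul_eq_mul, empiricalType]
    field_simp

lemma empiricalType_mem_stdSimplex [Nonempty ι] (y : ι → Y) :
    empiricalType y ∈ stdSimplex ℝ Y := by
  refine ⟨empiricalType_nonneg y, ?_⟩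
  have h := sum_comp_eq_card_mul_sum_empiricalType (fun _ => 1) y
  simpa using h

lemma prod_comp_eq_exp {q : Y → ℝ} {y : ι → Y} (hq : ∀ j, 0 < q (y j)) :
    ∏ j, q (y j) = Real.exp (Fintype.card ι * ∑ t, empiricalType y t * Real.log (q t)) := by
  rw [← sum_comp_eq_card_mul_sum_empiricalType (fun t => Real.log (q t)), Real.exp_sum]
  exact prod_congr rfl fun j _ => (Real.exp_log (hq j)).symm

lemma prod_comp_le_exp {q : Y → ℝ} (hq : ∀ t, 0 ≤ q t) (y : ι → Y) :
    ∏ j, q (y j) ≤ Real.exp (Fintype.card ι * ∑ t, empiricalType y t * Real.log (q t)) := by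
  by_cases hpos : ∀ j, 0 < q (y j)
  · exact (prod_comp_eq_exp hpos).le
  · obtain ⟨j, hj⟩ := not_forall.1 hpos
    rw [prod_eq_zero (mem_univ j) (le_antisymm (not_lt.1 hj) (hq _))]
    positivity

lemma card_image_empiricalType_le [DecidableEq ι] :
    #(univ.image (empiricalType : (ι → Y) → Y → ℝ)) ≤
      (Fintype.card ι + 1) ^ Fintype.card Y := by
  let frequencies : Finset ℝ :=
    (range (Fintype.card ι + 1)).image fun k : ℕ => k / (Fintype.card ι : ℝ)
  have hsub : univ.image (empiricalType : (ι → Y) → Y → ℝ) ⊆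
      Fintype.piFinset fun _ => frequencies := by
    refine image_subset_iff.2 fun y _ => Fintype.mem_piFinset.2 fun t => ?_
    exact mem_image_of_mem _ (mem_range_succ_iff.2 (card_le_univ _))
  calc #(univ.image (empiricalType : (ι → Y) → Y → ℝ))
      ≤ #(Fintype.piFinset fun _ : Y => frequencies) := card_le_card hsub
    _ = #frequencies ^ Fintype.card Y := by simp
    _ ≤ (Fintype.card ι + 1) ^ Fintype.card Y := by
      gcongr
      exact card_image_le.trans_eq (card_range _)

end EmpiricalType

section ShannonEntropy

variable {Y : Type*} [Fintype Y]

/-- The Shannon entropy `S(q) = -∑ t, q t * log (q t)` of a weight function `q`, in nats.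
Through `Real.negMulLog` it follows the convention `0 * log 0 = 0`. -/
noncomputable def shannonEntropy (q : Y → ℝ) : ℝ :=
  ∑ t, Real.negMulLog (q t)

lemma shannonEntropy_eq_neg_sum (q : Y → ℝ) :
    shannonEntropy q = -∑ t, q t * Real.log (q t) := by
  simp [shannonEntropy, Real.negMulLog]

lemma continuous_shannonEntropy : Continuous (shannonEntropy : (Y → ℝ) → ℝ) := by
  unfold shannonEntropy
  fun_prop

lemma bddAbove_shannonEntropy_image_stdSimplex :
    BddAbove (shannonEntropy '' stdSimplex ℝ Y) :=
  (isCompact_stdSimplex ℝ Y).bddAbove_image continuous_shannonEntropy.continuousOn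

end ShannonEntropy

section UpperBound

variable {ι Y : Type*} [Fintype ι] [Fintype Y] [DecidableEq Y]

lemma card_le_exp_shannonEntropy {q : Y → ℝ} (hq : q ∈ stdSimplex ℝ Y) {A : Finset (ι → Y)}
    (hA : ∀ y ∈ A, empiricalType y = q) :
    (#A : ℝ) ≤ Real.exp (Fintype.card ι * shannonEntropy q) := by
  classical
  have hweight : ∀ y ∈ A, ∏ j, q (y j) = Real.exp (-(Fintype.card ι * shannonEntropy q)) := by
    intro y hy
    rw [prod_comp_eq_exp fun j => hA y hy ▸ empiricalType_apply_self_pos y j, hA y hy,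
      shannonEntropy_eq_neg_sum, mul_neg, neg_neg]
  have htotal : ∑ y : ι → Y, ∏ j, q (y j) = 1 := by
    rw [← Fintype.piFinset_univ, sum_prod_piFinset univ fun _ => q]
    simp [hq.2]
  have hmass : #A * Real.exp (-(Fintype.card ι * shannonEntropy q)) ≤ 1 := by
    rw [← nsmul_eq_mul, ← sum_const, ← sum_congr rfl hweight, ← htotal]
    exact sum_le_univ_sum_of_nonneg fun y => prod_nonneg fun j _ => hq.1 _
  rwa [Real.exp_neg, ← div_eq_mul_inv, div_le_one (Real.exp_pos _)] at hmass

lemma card_le_pow_mul_exp_of_shannonEntropy_le [Nonempty ι] {A : Finset (ι → Y)} {s : ℝ}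
    (hA : ∀ y ∈ A, shannonEntropy (empiricalType y) ≤ s) :
    (#A : ℝ) ≤ (Fintype.card ι + 1 : ℝ) ^ Fintype.card Y * Real.exp (Fintype.card ι * s) := by
  classical
  have hfiber : ∀ q ∈ A.image empiricalType,
      (#{y ∈ A | empiricalType y = q} : ℝ) ≤ Real.exp (Fintype.card ι * s) := by
    refine forall_mem_image.2 fun y hy => ?_
    calc (#{z ∈ A | empiricalType z = empiricalType y} : ℝ)
        ≤ Real.exp (Fintype.card ι * shannonEntropy (empiricalType y)) :=
          card_le_exp_shannonEntropy (empiricalType_mem_stdSimplex y)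
            fun z hz => (mem_filter.1 hz).2
      _ ≤ Real.exp (Fintype.card ι * s) := by
          gcongr
          exact hA y hy
  have himage : #(A.image empiricalType) ≤ (Fintype.card ι + 1) ^ Fintype.card Y :=
    (card_le_card (image_subset_image (subset_univ A))).trans card_image_empiricalType_le
  calc (#A : ℝ) = ∑ q ∈ A.image empiricalType, (#{y ∈ A | empiricalType y = q} : ℝ) := by
        exact_mod_cast card_eq_sum_card_image empiricalType A
    _ ≤ #(A.image empiricalType) * Real.exp (Fintype.card ι * s) := by
        rw [← nsmul_eq_mul]
        exact sum_le_card_nsmul _ _ _ hfiber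
    _ ≤ (Fintype.card ι + 1 : ℝ) ^ Fintype.card Y * Real.exp (Fintype.card ι * s) := by
        gcongr
        exact_mod_cast himage

end UpperBound

section WeakLaw

variable {ι Y : Type*} [Fintype ι] [DecidableEq Y] [MeasurableSpace Y]
  [MeasurableSingletonClass Y] (μ : Measure Y) [IsProbabilityMeasure μ]

lemma integral_empiricalType [Nonempty ι] (t : Y) :
    ∫ y : ι → Y, empiricalType y t ∂Measure.pi (fun _ => μ) = μ.real {t} := by
  have hindicator : Integrable (Set.indicator {t} (1 : Y → ℝ)) μ :=
    (integrable_const 1).indicator (measurableSet_singleton t)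
  simp only [empiricalType_eq_sum_div]
  rw [integral_div, integral_finsetSum _ fun j _ => integrable_comp_eval hindicator]
  simp only [integral_comp_eval (μ := fun _ : ι => μ) hindicator.aestronglyMeasurable,
    integral_indicator_one (measurableSet_singleton t), sum_const, card_univ, nsmul_eq_mul]
  field_simp

lemma variance_empiricalType_le (t : Y) :
    Var[fun y : ι → Y => empiricalType y t; Measure.pi fun _ => μ] ≤
      1 / (4 * Fintype.card ι) := by
  have hindicator : Var[Set.indicator {t} 1; μ] ≤ 1 / 4 := by
    refine (variance_le_sq_of_bounded (a := 0) (b := 1) (.of_forall fun a => ?_)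
      (measurable_one.indicator (measurableSet_singleton t)).aemeasurable).trans_eq (by norm_num)
    by_cases h : a = t <;> simp [h]
  have hsum : Var[fun y : ι → Y => ∑ j, Set.indicator {t} 1 (y j); Measure.pi fun _ => μ] ≤
      Fintype.card ι * (1 / 4) := by
    have h := variance_sum_pi (μ := fun _ : ι => μ) fun _ =>
      memLp_indicator_const 2 (measurableSet_singleton t) (1 : ℝ) (.inr (measure_ne_top μ _))
    rw [sum_fn] at h
    refine h.trans_le ?_
    rw [sum_const, nsmul_eq_mul, card_univ]
    gcongr
    exact hindicator
  simp only [empiricalType_eq_sum_div, div_eq_inv_mul, variance_const_mul]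
  calc _ ≤ ((Fintype.card ι : ℝ)⁻¹) ^ 2 * (Fintype.card ι * (1 / 4)) := by gcongr
    _ = _ := by
      rcases isEmpty_or_nonempty ι with _ | _
      · simp
      · field_simp

lemma measureReal_pi_le_dist_empiricalType_le [Fintype Y] [Nonempty ι] {ε : ℝ} (hε : 0 < ε) :
    (Measure.pi fun _ : ι => μ).real {y | ε ≤ dist (empiricalType y) fun t => μ.real {t}} ≤
      Fintype.card Y / (4 * Fintype.card ι * ε ^ 2) := by
  have hsub : {y : ι → Y | ε ≤ dist (empiricalType y) fun t => μ.real {t}} ⊆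
      ⋃ t, {y | ε ≤ |empiricalType y t - μ.real {t}|} := by
    intro y hy
    contrapose! hy
    simpa [dist_pi_lt_iff hε, Real.dist_eq] using hy
  have hcoord (t : Y) :
      (Measure.pi fun _ : ι => μ).real {y | ε ≤ |empiricalType y t - μ.real {t}|} ≤
        1 / (4 * Fintype.card ι * ε ^ 2) := by
    have h := meas_ge_le_variance_div_sq (μ := Measure.pi fun _ : ι => μ)
      (X := fun y => empiricalType y t) .of_discrete hε
    rw [integral_empiricalType] at h
    calc _ ≤ Var[fun y : ι → Y => empiricalType y t; Measure.pi fun _ => μ] / ε ^ 2 :=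
          ENNReal.toReal_le_of_le_ofReal (div_nonneg (variance_nonneg _ _) (sq_nonneg ε)) h
      _ ≤ 1 / (4 * Fintype.card ι) / ε ^ 2 := by
          gcongr
          exact variance_empiricalType_le μ t
      _ = _ := div_div _ _ _
  calc _ ≤ ∑ t, (Measure.pi fun _ : ι => μ).real {y | ε ≤ |empiricalType y t - μ.real {t}|} :=
        (measureReal_mono hsub).trans (measureReal_iUnion_fintype_le _)
    _ ≤ ∑ _t : Y, 1 / (4 * Fintype.card ι * ε ^ 2) := sum_le_sum fun t _ => hcoord t
    _ = _ := by simp [div_eq_mul_inv]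

theorem tendsto_measureReal_pi_empiricalType_mem [Finite Y] {V : Set (Y → ℝ)}
    (hV : V ∈ 𝓝 fun t => μ.real {t}) :
    Tendsto (fun N : ℕ => (Measure.pi fun _ : Fin N => μ).real {y | empiricalType y ∈ V})
      atTop (𝓝 1) := by
  cases nonempty_fintype Y
  obtain ⟨ε, hε, hball⟩ := Metric.mem_nhds_iff.1 hV
  have herror : Tendsto (fun N : ℕ => 1 - Fintype.card Y / (4 * ε ^ 2) / N) atTop (𝓝 (1 : ℝ)) := by
    simpa only [sub_zero] using
      (tendsto_const_div_atTop_nhds_zero_nat (Fintype.card Y / (4 * ε ^ 2))).const_sub (1 : ℝ)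
  refine tendsto_of_tendsto_of_tendsto_of_le_of_le' herror tendsto_const_nhds ?_
    (.of_forall fun N => measureReal_le_one)
  filter_upwards [eventually_ne_atTop 0] with N hN
  have : NeZero N := ⟨hN⟩
  have hfar := measureReal_pi_le_dist_empiricalType_le (ι := Fin N) μ hε
  have hcompl : {y : Fin N → Y | empiricalType y ∈ V}ᶜ ⊆
      {y | ε ≤ dist (empiricalType y) fun t => μ.real {t}} :=
    fun y hy => not_lt.1 fun h => hy (hball (Metric.mem_ball.2 h))
  have hmiss := measureReal_mono (μ := Measure.pi fun _ : Fin N => μ) hcompl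
  rw [probReal_compl_eq_one_sub .of_discrete] at hmiss
  rw [Fintype.card_fin, mul_right_comm, ← div_div] at hfar
  linarith

end WeakLaw

section LowerBound

variable {Y : Type*} [Fintype Y]

lemma exists_isProbabilityMeasure_real_singleton_eq [MeasurableSpace Y]
    [MeasurableSingletonClass Y] {q : Y → ℝ} (hq : q ∈ stdSimplex ℝ Y) :
    ∃ μ : Measure Y, IsProbabilityMeasure μ ∧ ∀ t, μ.real {t} = q t := by
  have hsum : ∑ t, ENNReal.ofReal (q t) = 1 := by
    rw [← ENNReal.ofReal_sum_of_nonneg fun t _ => hq.1 t, hq.2, ENNReal.ofReal_one]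
  refine ⟨(PMF.ofFintype _ hsum).toMeasure, inferInstance, fun t => ?_⟩
  rw [measureReal_def, PMF.toMeasure_apply_singleton _ _ (measurableSet_singleton t),
    PMF.ofFintype_apply, ENNReal.toReal_ofReal (hq.1 t)]

variable [DecidableEq Y]

lemma measureReal_pi_mul_exp_le_card {ι : Type*} [Fintype ι] [MeasurableSpace Y]
    [MeasurableSingletonClass Y] (μ : Measure Y) [SigmaFinite μ] {A : Finset (ι → Y)} {s : ℝ}
    (hA : ∀ y ∈ A, ∑ t, empiricalType y t * Real.log (μ.real {t}) ≤ -s) :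
    (Measure.pi fun _ : ι => μ).real A * Real.exp (Fintype.card ι * s) ≤ #A := by
  have hweight : ∀ y ∈ A,
      (Measure.pi fun _ : ι => μ).real {y} ≤ Real.exp (-(Fintype.card ι * s)) := by
    intro y hy
    calc (Measure.pi fun _ : ι => μ).real {y} = ∏ j, μ.real {y j} := by
          simp only [measureReal_def, Measure.pi_singleton, ENNReal.toReal_prod]
      _ ≤ Real.exp (Fintype.card ι * ∑ t, empiricalType y t * Real.log (μ.real {t})) :=
          prod_comp_le_exp (q := fun t => μ.real {t}) (fun _ => measureReal_nonneg) y
      _ ≤ Real.exp (-(Fintype.card ι * s)) := by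
          rw [← mul_neg]
          gcongr
          exact hA y hy
  have hmass := sum_le_card_nsmul _ _ _ hweight
  rwa [sum_measureReal_singleton, nsmul_eq_mul, Real.exp_neg, ← div_eq_mul_inv,
    le_div_iff₀ (Real.exp_pos _)] at hmass

theorem eventually_exp_mul_le_card_empiricalType_mem {q : Y → ℝ} (hq : q ∈ stdSimplex ℝ Y)
    {U : Set (Y → ℝ)} (hU : U ∈ 𝓝 q) {s : ℝ} (hs : s < shannonEntropy q) :
    ∀ᶠ N : ℕ in atTop, Real.exp (N * s) ≤ Nat.card {y : Fin N → Y // empiricalType y ∈ U} := by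
  classical
  let _ : MeasurableSpace Y := ⊤
  obtain ⟨μ, _, hμ⟩ := exists_isProbabilityMeasure_real_singleton_eq hq
  obtain rfl : (fun t => μ.real {t}) = q := funext hμ
  obtain ⟨s', hs', hs'q⟩ := exists_between hs
  let V : Set (Y → ℝ) := U ∩ {ν | ∑ t, ν t * Real.log (μ.real {t}) < -s'}
  have hV : V ∈ 𝓝 fun t => μ.real {t} := by
    refine inter_mem hU ((isOpen_lt (by fun_prop) continuous_const).mem_nhds ?_)
    rw [shannonEntropy_eq_neg_sum] at hs'q
    exact lt_neg_of_lt_neg hs'q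
  have hhalf := (tendsto_measureReal_pi_empiricalType_mem μ hV).eventually_const_le one_half_lt_one
  have hlarge : ∀ᶠ N : ℕ in atTop, Real.log 2 / (s' - s) ≤ N :=
    tendsto_natCast_atTop_atTop.eventually_ge_atTop _
  filter_upwards [hhalf, hlarge] with N hmass hN
  let A : Finset (Fin N → Y) := {y | empiricalType y ∈ V}
  have hAU : #A ≤ Nat.card {y : Fin N → Y // empiricalType y ∈ U} := by
    rw [Nat.card_eq_fintype_card, Fintype.card_subtype]
    exact card_le_card (monotone_filter_right _ fun y _ hy => hy.1)
  have hA := measureReal_pi_mul_exp_le_card μ (A := A) fun y hy => (mem_filter.1 hy).2.2.le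
  rw [Fintype.card_fin] at hA
  calc Real.exp (N * s) ≤ Real.exp (N * s' - Real.log 2) := by
        rw [div_le_iff₀ (sub_pos.2 hs')] at hN
        gcongr
        linarith
    _ = 1 / 2 * Real.exp (N * s') := by
        rw [Real.exp_sub, Real.exp_log two_pos]
        ring
    _ ≤ (Measure.pi fun _ : Fin N => μ).real A * Real.exp (N * s') := by
        gcongr
        simpa [A] using hmass
    _ ≤ #A := hA
    _ ≤ _ := by exact_mod_cast hAU

end LowerBound

section GrowthRate

lemma tendsto_log_natCast_add_one_div :
    Tendsto (fun N : ℕ => Real.log (N + 1) / N) atTop (𝓝 0) := by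
  have hshift : Tendsto (fun N : ℕ => (N : ℝ) + 1) atTop atTop :=
    tendsto_atTop_add_const_right _ _ tendsto_natCast_atTop_atTop
  simpa [Function.comp_def] using
    (Real.tendsto_pow_log_div_mul_add_atTop 1 (-1) 1 one_ne_zero).comp hshift

variable {Y : Type*} [Fintype Y] [DecidableEq Y] {U : Set (Y → ℝ)}

lemma log_card_empiricalType_mem_div_le {N : ℕ} [NeZero N]
    (hpos : 0 < Nat.card {y : Fin N → Y // empiricalType y ∈ U}) :
    Real.log (Nat.card {y : Fin N → Y // empiricalType y ∈ U}) / N ≤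
      Fintype.card Y * (Real.log (N + 1) / N) + sSup (shannonEntropy '' (stdSimplex ℝ Y ∩ U)) := by
  classical
  set s := sSup (shannonEntropy '' (stdSimplex ℝ Y ∩ U))
  have hN : (0 : ℝ) < N := by exact_mod_cast NeZero.pos N
  have hentropy : ∀ y ∈ ({y | empiricalType y ∈ U} : Finset (Fin N → Y)),
      shannonEntropy (empiricalType y) ≤ s := fun y hy =>
    le_csSup (bddAbove_shannonEntropy_image_stdSimplex.mono (Set.image_mono Set.inter_subset_left))
      (Set.mem_image_of_mem _ ⟨empiricalType_mem_stdSimplex y, (mem_filter.1 hy).2⟩)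
  have hcard := card_le_pow_mul_exp_of_shannonEntropy_le hentropy
  rw [← Fintype.card_subtype, ← Nat.card_eq_fintype_card, Fintype.card_fin] at hcard
  have hlog := Real.log_le_log (by exact_mod_cast hpos) hcard
  rw [Real.log_mul (by positivity) (Real.exp_pos _).ne', Real.log_pow, Real.log_exp] at hlog
  rw [div_le_iff₀ hN]
  refine hlog.trans_eq ?_
  field_simp

theorem stmt2_general (hU : IsOpen U) (hne : (stdSimplex ℝ Y ∩ U).Nonempty) :
    Tendsto
      (fun N : ℕ => Real.log (Nat.card {y : Fin N → Y // empiricalType y ∈ U}) / N)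
      atTop (𝓝 (sSup (shannonEntropy '' (stdSimplex ℝ Y ∩ U)))) := by
  refine tendsto_order.2 ⟨fun a ha => ?_, fun a ha => ?_⟩
  · obtain ⟨_, ⟨q, ⟨hq, hqU⟩, rfl⟩, haq⟩ := exists_lt_of_lt_csSup (hne.image _) ha
    obtain ⟨s, has, hsq⟩ := exists_between haq
    filter_upwards [eventually_exp_mul_le_card_empiricalType_mem hq (hU.mem_nhds hqU) hsq,
      eventually_gt_atTop 0] with N hcard hN
    refine has.trans_le ((le_div_iff₀' (by exact_mod_cast hN)).2 ?_)
    exact (Real.le_log_iff_exp_le ((Real.exp_pos _).trans_le hcard)).2 hcard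
  · obtain ⟨q, hq, hqU⟩ := hne
    have hbound := (tendsto_log_natCast_add_one_div.const_mul (Fintype.card Y : ℝ)).add_const
      (sSup (shannonEntropy '' (stdSimplex ℝ Y ∩ U)))
    rw [mul_zero, zero_add] at hbound
    filter_upwards [hbound.eventually_lt_const ha, eventually_ne_atTop 0,
      eventually_exp_mul_le_card_empiricalType_mem hq (hU.mem_nhds hqU) (sub_one_lt _)]
      with N hN hN0 hcard
    have : NeZero N := ⟨hN0⟩
    have hpos : 0 < Nat.card {y : Fin N → Y // empiricalType y ∈ U} := by
      exact_mod_cast (Real.exp_pos _).trans_le hcard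
    exact (log_card_empiricalType_mem_div_le hpos).trans_lt hN

end GrowthRate

/-- For fixed `δ > 0`, `(1/N) log #Δ(p;N,δ)` converges as `N → ∞` to the
supremum of the Shannon entropies of probability measures `q` on `Y` with
`|q(t) - p(t)| < δ` for all `t`. -/
theorem stmt2 {Y : Type*} [Fintype Y] [DecidableEq Y]
    (p : Y → ℝ) (hp0 : ∀ t, 0 ≤ p t) (hp1 : ∑ t, p t = 1)
    (δ : ℝ) (hδ : 0 < δ) :
    Tendsto
      (fun N : ℕ =>
        Real.log (Nat.card {y : Fin N → Y // ∀ t : Y,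
          |((Finset.univ.filter fun j => y j = t).card : ℝ) / N - p t| < δ}) / N)
      atTop
      (nhds (sSup {s : ℝ | ∃ q : Y → ℝ, (∀ t, 0 ≤ q t) ∧ (∑ t, q t = 1) ∧
        (∀ t, |q t - p t| < δ) ∧ s = -∑ t, q t * Real.log (q t)})) := by
  simpa [dist_pi_lt_iff hδ, Real.dist_eq, empiricalType, shannonEntropy_eq_neg_sum, stdSimplex,
    Set.image, and_assoc, eq_comm] using
    stmt2_general Metric.isOpen_ball ⟨p, ⟨hp0, hp1⟩, Metric.mem_ball_self hδ⟩
end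

section
/- Let X_1,...,X_n be bounded real random variables and R ≥ max_i ‖X_i‖_∞. Then H(X_1,...,X_n) ≤ ∑_{i=1}^n H(X_i) − Ī_sym(X_1,...,X_n), where Ī_sym is the upper mutual information defined via the liminf over N of the normalized log-volumes of permutation micro-states. -/
open MeasureTheory Filter
open scoped Classical ENNReal

/-- Normalized coordinate sum `κ_N(x) = N⁻¹ ∑_j x_j`. -/
noncomputable def kappa {N : ℕ} (x : Fin N → ℝ) : ℝ := (∑ j, x j) / N

/-- The micro-state set `Δ_R(X₁,…,Xₙ;N,m,δ)`: `n`-tuples of vectors in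
`[-R,R]^N` whose normalized mixed moments up to order `m` approximate the
joint moments of `(X₁,…,Xₙ)` within `δ`. -/
noncomputable def DeltaR {Ω : Type*} [MeasurableSpace Ω] (μ : Measure Ω)
    {n : ℕ} (X : Fin n → Ω → ℝ) (R : ℝ) (N m : ℕ) (δ : ℝ) :
    Set (Fin n → Fin N → ℝ) :=
  {x | (∀ i j, |x i j| ≤ R) ∧
    ∀ k : ℕ, 1 ≤ k → k ≤ m → ∀ idx : Fin k → Fin n,
      |kappa (fun j => ∏ l, x (idx l) j) - ∫ ω, ∏ l, X (idx l) ω ∂μ| < δ}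

/-- The permutation micro-state set `Δ_{sym,R}(X₁,…,Xₙ;N,m,δ) ⊆ S_N^n`:
tuples `(σ₁,…,σₙ)` such that `(σ₁(x₁),…,σₙ(xₙ)) ∈ Δ_R` for some nondecreasing
`x₁,…,xₙ ∈ ℝ^N_≤`. -/
noncomputable def DeltaSymR {Ω : Type*} [MeasurableSpace Ω] (μ : Measure Ω)
    {n : ℕ} (X : Fin n → Ω → ℝ) (R : ℝ) (N m : ℕ) (δ : ℝ) :
    Set (Fin n → Equiv.Perm (Fin N)) :=
  {σ | ∃ x : Fin n → Fin N → ℝ, (∀ i, Monotone (x i)) ∧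
    (fun i j => x i ((σ i)⁻¹ j)) ∈ DeltaR μ X R N m δ}

/-- `(1/N) log γ_{S_N}^{⊗n}(Δ_{sym,R}(X₁,…,Xₙ;N,m,δ))`, the normalized log of
the uniform probability of the permutation micro-states. -/
noncomputable def symQ {Ω : Type*} [MeasurableSpace Ω] (μ : Measure Ω)
    {n : ℕ} (X : Fin n → Ω → ℝ) (R : ℝ) (N m : ℕ) (δ : ℝ) : ℝ :=
  Real.log ((Nat.card (DeltaSymR μ X R N m δ) : ℝ) / (N.factorial : ℝ) ^ n) / N

/-- `(1/N) log λ_N^{⊗n}(Δ_R(X₁,…,Xₙ;N,m,δ))`, the normalized log-volume of the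
micro-states. -/
noncomputable def volQ {Ω : Type*} [MeasurableSpace Ω] (μ : Measure Ω)
    {n : ℕ} (X : Fin n → Ω → ℝ) (R : ℝ) (N m : ℕ) (δ : ℝ) : ℝ :=
  Real.log (volume (DeltaR μ X R N m δ)).toReal / N

/-- The mutual information `I_sym`, via `limsup` in `N` and the limit
(= infimum, by monotonicity) over `m → ∞`, `δ → 0+`. -/
noncomputable def Isym {Ω : Type*} [MeasurableSpace Ω] (μ : Measure Ω)
    {n : ℕ} (X : Fin n → Ω → ℝ) (R : ℝ) : EReal :=
  -(⨅ (m : ℕ) (δ : ℝ) (_ : 0 < δ),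
      Filter.limsup (fun N : ℕ => ((symQ μ X R N m δ : ℝ) : EReal)) atTop)

/-- The upper mutual information `Ī_sym`, via `liminf` in `N`. -/
noncomputable def IsymUpper {Ω : Type*} [MeasurableSpace Ω] (μ : Measure Ω)
    {n : ℕ} (X : Fin n → Ω → ℝ) (R : ℝ) : EReal :=
  -(⨅ (m : ℕ) (δ : ℝ) (_ : 0 < δ),
      Filter.liminf (fun N : ℕ => ((symQ μ X R N m δ : ℝ) : EReal)) atTop)

/-- Boltzmann–Gibbs (differential) entropy of `μ` with respect to a reference
measure `vol`, with value `⊥` (i.e. `-∞`) when `μ` has no density. -/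
noncomputable def diffEntropy {E : Type*} [MeasurableSpace E] (vol μ : Measure E) : EReal :=
  if μ ≪ vol then
    ((∫⁻ x, ENNReal.ofReal (Real.negMulLog (μ.rnDeriv vol x).toReal) ∂vol : ℝ≥0∞) : EReal)
      - ((∫⁻ x, ENNReal.ofReal (-(Real.negMulLog (μ.rnDeriv vol x).toReal)) ∂vol : ℝ≥0∞) : EReal)
  else ⊥

/-- Lemma 1.2 of the paper (assumed): the Boltzmann–Gibbs entropy is the
asymptotic normalized log-volume of the micro-state sets `Δ_R`, the limit in
`N` existing. -/
def MicrostateVolumeFormula {Ω : Type*} [MeasurableSpace Ω] (μ : Measure Ω)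
    {n : ℕ} (X : Fin n → Ω → ℝ) (R : ℝ) : Prop :=
  diffEntropy volume (Measure.map (fun ω (i : Fin n) => X i ω) μ)
      = ⨅ (m : ℕ) (δ : ℝ) (_ : 0 < δ),
          Filter.limsup (fun N : ℕ => ((volQ μ X R N m δ : ℝ) : EReal)) atTop ∧
  diffEntropy volume (Measure.map (fun ω (i : Fin n) => X i ω) μ)
      = ⨅ (m : ℕ) (δ : ℝ) (_ : 0 < δ),
          Filter.liminf (fun N : ℕ => ((volQ μ X R N m δ : ℝ) : EReal)) atTop

/-!
Almost every tuple of vectors in `ℝ^N` has pairwise distinct entries in each vector, so it is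
obtained from unique strictly increasing vectors by a unique tuple of permutations. If the tuple
lies in `Δ_R(X₁,…,Xₙ)`, those permutations lie in `Δ_{sym,R}` and each vector, sorted or not, is a
micro-state of its `Xᵢ`, because symmetric sums ignore the order of the entries. The increasing
vectors take up at most the fraction `1/N!` of the permutation-invariant set `Δ_R(Xᵢ)`, hence
`λ(Δ_R(X₁,…,Xₙ)) ≤ γ(Δ_{sym,R}) · ∏ᵢ λ(Δ_R(Xᵢ))`. Taking `(1/N) log` and passing to the limit gives
the inequality of entropies. With `Real.log 0 = 0` this needs `λ(Δ_R(X₁,…,Xₙ)) > 0` for large `N`: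
by the law of large numbers a random sample is eventually a micro-state, and near a point of the
cube `[-R,R]^N`, `R > 0`, the open moment conditions hold on a set of positive volume. If `R ≤ 0`
(and `n ≥ 1`) the `Xᵢ` have no joint density and the entropy on the left is `-∞`.
-/

open ProbabilityTheory
open scoped Topology

section EReal

variable {α ι : Type*}

lemma ereal_coe_finset_sum (s : Finset ι) (a : ι → ℝ) :
    ((∑ i ∈ s, a i : ℝ) : EReal) = ∑ i ∈ s, (a i : EReal) :=
  map_sum (⟨⟨Real.toEReal, EReal.coe_zero⟩, EReal.coe_add⟩ : ℝ →+ EReal) a s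

lemma ereal_finset_sum_ne_top {s : Finset ι} {a : ι → EReal} (ha : ∀ i ∈ s, a i ≠ ⊤) :
    ∑ i ∈ s, a i ≠ ⊤ :=
  Finset.sum_induction a (· ≠ ⊤) (fun _ _ => EReal.add_ne_top) EReal.zero_ne_top ha

lemma limsup_finset_sum_le {l : Filter α} {s : Finset ι} {u : ι → α → EReal}
    (hu : ∀ i ∈ s, limsup (u i) l ≠ ⊤) :
    limsup (fun a => ∑ i ∈ s, u i a) l ≤ ∑ i ∈ s, limsup (u i) l := by
  induction s using Finset.induction_on with
  | empty =>
    simp only [Finset.sum_empty]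
    exact limsup_le_of_le (h := Eventually.of_forall fun _ => le_rfl)
  | insert i s hi ih =>
    simp only [Finset.sum_insert hi]
    have hi_top := hu i (Finset.mem_insert_self i s)
    have hs_top : ∀ j ∈ s, limsup (u j) l ≠ ⊤ := fun j hj => hu j (Finset.mem_insert_of_mem hj)
    have hsum_top := ne_top_of_le_ne_top (ereal_finset_sum_ne_top hs_top) (ih hs_top)
    exact (EReal.limsup_add_le (.inr hsum_top) (.inl hi_top)).trans (add_le_add_right (ih hs_top) _)

lemma liminf_finset_sum_add_le {l : Filter α} {s : Finset ι} {u : ι → α → EReal} {v : α → EReal}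
    (hu : ∀ i ∈ s, limsup (u i) l ≠ ⊤) (hv : liminf v l ≠ ⊤) :
    liminf (fun a => ∑ i ∈ s, u i a + v a) l ≤ ∑ i ∈ s, limsup (u i) l + liminf v l := by
  have hsum := limsup_finset_sum_le hu
  have hsum_top := ne_top_of_le_ne_top (ereal_finset_sum_ne_top hu) hsum
  exact (EReal.liminf_add_le (.inr hv) (.inl hsum_top)).trans (add_le_add_left hsum _)

lemma iInf_finset_sum_add_le_of_antitone {P : Type*} [Preorder P] [IsDirectedOrder P] [Nonempty P]
    {s : Finset ι} {f : ι → P → EReal} {g : P → EReal} (hf : ∀ i, Antitone (f i))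
    (hg : Antitone g) (hf_top : ∀ i ∈ s, ⨅ p, f i p ≠ ⊤) (hg_top : ⨅ p, g p ≠ ⊤) :
    ⨅ p, (∑ i ∈ s, f i p + g p) ≤ ∑ i ∈ s, (⨅ p, f i p) + ⨅ p, g p := by
  have hf_lim : ∀ i, limsup (f i) atTop = ⨅ p, f i p := fun i =>
    (tendsto_atTop_iInf (hf i)).limsup_eq
  have hg_lim : liminf g atTop = ⨅ p, g p := (tendsto_atTop_iInf hg).liminf_eq
  simp only [← hf_lim, ← hg_lim] at hf_top hg_top ⊢
  exact iInf_le_liminf.trans (liminf_finset_sum_add_le hf_top hg_top)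

end EReal

lemma measure_inter_pos_of_convex {E : Type*} [AddCommGroup E] [Module ℝ E] [TopologicalSpace E]
    [IsTopologicalAddGroup E] [ContinuousSMul ℝ E] [MeasurableSpace E] {ν : Measure E}
    [ν.IsOpenPosMeasure] {K U : Set E} (hK : Convex ℝ K) (hint : (interior K).Nonempty)
    (hU : IsOpen U) (hKU : (K ∩ U).Nonempty) : 0 < ν (K ∩ U) := by
  obtain ⟨x, hxK, hxU⟩ := hKU
  have hx : x ∈ closure (interior K) :=
    hK.closure_interior_eq_closure_of_nonempty_interior hint ▸ subset_closure hxK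
  have hne : (interior K ∩ U).Nonempty := Set.inter_comm U _ ▸ mem_closure_iff.1 hx U hU hxU
  exact ((isOpen_interior.inter hU).measure_pos ν hne).trans_le
    (measure_mono (Set.inter_subset_inter_left U interior_subset))

section RandomVariables

variable {Ω : Type*} [MeasurableSpace Ω] {μ : Measure Ω}

lemma integrable_fintype_prod_of_ae_abs_le [IsFiniteMeasure μ] {κ : Type*} [Fintype κ]
    {Y : κ → Ω → ℝ} {R : ℝ} (hY : ∀ l, AEMeasurable (Y l) μ)
    (hbdd : ∀ l, ∀ᵐ ω ∂μ, |Y l ω| ≤ R) : Integrable (fun ω => ∏ l, Y l ω) μ := by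
  refine .of_bound (Finset.aemeasurable_fun_prod _ fun l _ => hY l).aestronglyMeasurable
    (∏ _l : κ, R) ?_
  filter_upwards [ae_all_iff.2 hbdd] with ω hω
  rw [Real.norm_eq_abs, Finset.abs_prod]
  exact Finset.prod_le_prod (fun _ _ => abs_nonneg _) fun l _ => hω l

lemma pos_of_map_absolutelyContinuous [NeZero μ] {ι : Type*} [Fintype ι] [Nonempty ι]
    {X : ι → Ω → ℝ} {R : ℝ} (hbdd : ∀ i, ∀ᵐ ω ∂μ, |X i ω| ≤ R)
    (hac : Measure.map (fun ω i => X i ω) μ ≪ volume) : 0 < R := by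
  by_contra! hR
  have hzero : (fun ω i => X i ω) =ᵐ[μ] fun _ => 0 := by
    filter_upwards [ae_all_iff.2 hbdd] with ω hω
    exact funext fun i => abs_nonpos_iff.1 ((hω i).trans hR)
  have hmap : Measure.map (fun ω i => X i ω) μ {0} = 0 := hac (measure_singleton 0)
  rw [Measure.map_congr hzero, Measure.map_const] at hmap
  simp [NeZero.ne μ] at hmap

lemma ae_tendsto_average_infinitePi [IsProbabilityMeasure μ] {f : Ω → ℝ} (hf : Integrable f μ) :
    ∀ᵐ ω ∂Measure.infinitePi (fun _ : ℕ => μ),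
      Tendsto (fun N : ℕ => (∑ j ∈ Finset.range N, f (ω j)) / N) atTop (𝓝 (∫ x, f x ∂μ)) := by
  have heval := measurePreserving_eval_infinitePi (fun _ : ℕ => μ)
  have hf_eval (j : ℕ) :
      AEMeasurable f (Measure.map (fun ω : ℕ → Ω => ω j) (.infinitePi fun _ => μ)) :=
    (heval j).map_eq.symm ▸ hf.aemeasurable
  have hindep : iIndepFun (fun (j : ℕ) (ω : ℕ → Ω) => f (ω j)) (.infinitePi fun _ => μ) :=
    (iIndepFun_infinitePi (P := fun _ : ℕ => μ) (X := fun _ ω => ω) fun _ => measurable_id).comp₀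
      (fun _ => f) (fun j => (measurable_pi_apply j).aemeasurable) hf_eval
  have hident (j : ℕ) : IdentDistrib (fun ω : ℕ → Ω => f (ω j)) (fun ω => f (ω 0))
      (.infinitePi fun _ => μ) (.infinitePi fun _ => μ) :=
    IdentDistrib.comp_of_aemeasurable (u := f)
      ⟨(measurable_pi_apply j).aemeasurable, (measurable_pi_apply 0).aemeasurable,
        (heval j).map_eq.trans (heval 0).map_eq.symm⟩ (hf_eval j)
  have hmean : ∫ ω, f (ω 0) ∂(Measure.infinitePi fun _ : ℕ => μ) = ∫ x, f x ∂μ := by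
    rw [← integral_map (measurable_pi_apply 0).aemeasurable (hf_eval 0).aestronglyMeasurable,
      (heval 0).map_eq]
  rw [← hmean]
  exact strong_law_ae_real _ ((heval 0).integrable_comp_of_integrable hf)
    (fun i j hij => hindep.indepFun hij) hident

end RandomVariables

section Sorting

variable {N : ℕ}

lemma eq_of_strictMono_comp {α : Type*} [LinearOrder α] {z : Fin N → α} {σ τ : Equiv.Perm (Fin N)}
    (hσ : StrictMono (z ∘ σ)) (hτ : StrictMono (z ∘ τ)) : σ = τ := by
  have hz : Function.Injective z := (Function.Injective.of_comp_iff' z σ.bijective).1 hσ.injective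
  ext j
  exact congrArg Fin.val (hz (congrFun (Tuple.unique_monotone hσ.monotone hτ.monotone) j))

lemma strictMono_comp_sort {α : Type*} [LinearOrder α] {z : Fin N → α}
    (hz : Function.Injective z) : StrictMono (z ∘ Tuple.sort z) :=
  (Tuple.monotone_sort z).strictMono_of_injective (hz.comp (Tuple.sort z).injective)

lemma measurableSet_strictMono {ι : Type*} [Preorder ι] [Countable ι] :
    MeasurableSet {y : ι → ℝ | StrictMono y} := by
  simp only [StrictMono, Set.ofPred_forall]
  exact .iInter fun a => .iInter fun b => .iInter fun _ =>
    measurableSet_lt (measurable_pi_apply a) (measurable_pi_apply b)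

lemma volume_preimage_comp_perm {ι : Type*} [Fintype ι] (σ : Equiv.Perm ι) (S : Set (ι → ℝ)) :
    volume ((fun z : ι → ℝ => z ∘ σ) ⁻¹' S) = volume S :=
  (volume_preserving_arrowCongr' σ.symm (.refl ℝ) (.id volume)).measure_preimage_equiv S

lemma ae_injective_volume {ι : Type*} [Fintype ι] :
    ∀ᵐ z : ι → ℝ, Function.Injective z := by
  have hdiag : ∀ j k : ι, j ≠ k → ∀ᵐ z : ι → ℝ, z j ≠ z k := fun j k hjk => by
    let L : (ι → ℝ) →ₗ[ℝ] ℝ := .proj j - .proj k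
    have hL : LinearMap.ker L ≠ ⊤ := fun htop => by
      have : (Pi.single j 1 : ι → ℝ) ∈ LinearMap.ker L := htop ▸ trivial
      simp [L, hjk.symm] at this
    refine (measure_eq_zero_iff_ae_notMem.1 (Measure.addHaar_submodule volume _ hL)).mono ?_
    intro z hz hzjk
    exact hz (by simp [L, hzjk])
  filter_upwards [ae_all_iff.2 fun j => ae_all_iff.2 fun k => ae_all_iff.2 (hdiag j k)]
    with z hz j k hzjk
  exact by_contra fun hjk => hz j k hjk hzjk

/-- A set of vectors that is stable under every permutation of the coordinates. -/
def PermInvariant {ι α : Type*} (S : Set (ι → α)) : Prop :=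
  ∀ σ : Equiv.Perm ι, ∀ y ∈ S, y ∘ σ ∈ S

-- The `N!` sets `{z | z ∘ σ ∈ S, z ∘ σ strictly increasing}` are disjoint, congruent and in `S`.
lemma PermInvariant.volume_inter_strictMono_le {S : Set (Fin N → ℝ)} (hperm : PermInvariant S)
    (hS : MeasurableSet S) : volume (S ∩ {y | StrictMono y}) ≤ volume S / N.factorial := by
  let chamber (σ : Equiv.Perm (Fin N)) : Set (Fin N → ℝ) :=
    (fun z => z ∘ σ) ⁻¹' (S ∩ {y | StrictMono y})
  have hmeas : ∀ σ, MeasurableSet (chamber σ) := fun σ =>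
    (hS.inter measurableSet_strictMono).preimage
      (measurable_pi_lambda _ fun j => measurable_pi_apply (σ j))
  have hdisj : Pairwise (Function.onFun Disjoint chamber) := fun σ τ hne =>
    Set.disjoint_left.2 fun z hσ hτ => hne (eq_of_strictMono_comp hσ.2 hτ.2)
  have hsub : ⋃ σ, chamber σ ⊆ S := Set.iUnion_subset fun σ z hz => by
    simpa [Function.comp_assoc] using hperm σ⁻¹ _ hz.1
  have hvol : ∀ σ, volume (chamber σ) = volume (S ∩ {y | StrictMono y}) := fun σ =>
    volume_preimage_comp_perm σ _
  rw [ENNReal.le_div_iff_mul_le (.inl (by simp [N.factorial_ne_zero])) (.inl (by simp))]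
  calc volume (S ∩ {y | StrictMono y}) * N.factorial = volume (⋃ σ, chamber σ) := by
        rw [measure_iUnion hdisj hmeas, tsum_fintype]
        simp [hvol, Fintype.card_perm, mul_comm]
    _ ≤ volume S := measure_mono hsub

variable {ι : Type*}

/-- The tuples of permutations that carry some tuple of nondecreasing vectors into `A`, so that
`Δ_sym,R` is the case `A = Δ_R`. A vector is permuted as in `DeltaSymR`: `σ(x)_j = x_{σ⁻¹(j)}`. -/
def sortingPerms (A : Set (ι → Fin N → ℝ)) : Set (ι → Equiv.Perm (Fin N)) :=
  {σ | ∃ x : ι → Fin N → ℝ, (∀ i, Monotone (x i)) ∧ (fun i j => x i ((σ i)⁻¹ j)) ∈ A}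

lemma sortingPerms_mono {A A' : Set (ι → Fin N → ℝ)} (h : A ⊆ A') :
    sortingPerms A ⊆ sortingPerms A' :=
  fun _ ⟨x, hmono, hx⟩ => ⟨x, hmono, h hx⟩

lemma sort_mem_sortingPerms {A : Set (ι → Fin N → ℝ)} {x : ι → Fin N → ℝ} (hx : x ∈ A) :
    (fun i => Tuple.sort (x i)) ∈ sortingPerms A :=
  ⟨fun i => x i ∘ Tuple.sort (x i), fun i => Tuple.monotone_sort (x i), by simpa using hx⟩

lemma volume_le_card_sortingPerms_mul [Fintype ι] {A : Set (ι → Fin N → ℝ)}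
    {B : ι → Set (Fin N → ℝ)} (hAB : A ⊆ Set.univ.pi B) (hB : ∀ i, MeasurableSet (B i))
    (hperm : ∀ i, PermInvariant (B i)) :
    volume A ≤ Nat.card (sortingPerms A) * ∏ i, (volume (B i) / N.factorial) := by
  let chamber (σ : ι → Equiv.Perm (Fin N)) : Set (ι → Fin N → ℝ) :=
    Set.univ.pi fun i => (fun z => z ∘ σ i) ⁻¹' (B i ∩ {y | StrictMono y})
  have hvol : ∀ σ, volume (chamber σ) = ∏ i, volume (B i ∩ {y | StrictMono y}) := fun σ => by
    simp only [chamber, volume_pi_pi, volume_preimage_comp_perm]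
  have hinj : ∀ᵐ x : ι → Fin N → ℝ, ∀ i, Function.Injective (x i) := ae_all_iff.2 fun i =>
    (Measure.quasiMeasurePreserving_eval (fun _ : ι => volume) i).ae ae_injective_volume
  have hcover : A ≤ᵐ[volume] ⋃ σ : sortingPerms A, chamber σ := by
    filter_upwards [hinj] with x hx hxA
    exact Set.mem_iUnion.2 ⟨⟨_, sort_mem_sortingPerms hxA⟩, fun i _ =>
      ⟨hperm i _ _ (hAB hxA i trivial), strictMono_comp_sort (hx i)⟩⟩
  calc volume A ≤ ∑ σ : sortingPerms A, volume (chamber σ) :=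
        (measure_mono_ae hcover).trans (measure_iUnion_fintype_le _ _)
    _ = Nat.card (sortingPerms A) * ∏ i, volume (B i ∩ {y | StrictMono y}) := by
        simp [hvol, Nat.card_eq_fintype_card]
    _ ≤ Nat.card (sortingPerms A) * ∏ i, (volume (B i) / N.factorial) := by
        gcongr with i
        exact (hperm i).volume_inter_strictMono_le (hB i)

end Sorting

section Microstates

variable {Ω : Type*} [MeasurableSpace Ω] {μ : Measure Ω} {n N m m' : ℕ} {X : Fin n → Ω → ℝ}
  {R δ δ' : ℝ}

/-- The tuples of vectors whose normalized mixed moments up to order `m` are `δ`-close to those of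
`X`. These are the micro-states without the cut-off at `R`, which makes them an open set. -/
def momentNeighborhood (μ : Measure Ω) (X : Fin n → Ω → ℝ) (N m : ℕ) (δ : ℝ) :
    Set (Fin n → Fin N → ℝ) :=
  {x | ∀ k : ℕ, 1 ≤ k → k ≤ m → ∀ idx : Fin k → Fin n,
    |kappa (fun j => ∏ l, x (idx l) j) - ∫ ω, ∏ l, X (idx l) ω ∂μ| < δ}

lemma isOpen_momentNeighborhood : IsOpen (momentNeighborhood μ X N m δ) := by
  have hfin : momentNeighborhood μ X N m δ = ⋂ k ∈ Finset.Icc 1 m, ⋂ idx : Fin k → Fin n,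
      {x | |kappa (fun j => ∏ l, x (idx l) j) - ∫ ω, ∏ l, X (idx l) ω ∂μ| < δ} := by
    ext x
    simp [momentNeighborhood]
  rw [hfin]
  refine isOpen_biInter_finset fun k _ => isOpen_iInter_of_finite fun idx =>
    isOpen_lt ?_ continuous_const
  unfold kappa
  fun_prop

lemma DeltaR_eq_Icc_inter :
    DeltaR μ X R N m δ = Set.Icc (fun _ _ => -R) (fun _ _ => R) ∩ momentNeighborhood μ X N m δ := by
  ext x
  simp [DeltaR, momentNeighborhood, Pi.le_def, abs_le, forall_and]

lemma measurableSet_DeltaR : MeasurableSet (DeltaR μ X R N m δ) := by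
  rw [DeltaR_eq_Icc_inter]
  exact measurableSet_Icc.inter isOpen_momentNeighborhood.measurableSet

lemma volume_DeltaR_le : volume (DeltaR μ X R N m δ) ≤ ENNReal.ofReal (2 * R) ^ (N * n) := by
  calc volume (DeltaR μ X R N m δ)
      ≤ volume (Set.Icc (fun _ _ => -R) (fun _ _ => R) : Set (Fin n → Fin N → ℝ)) :=
        measure_mono (DeltaR_eq_Icc_inter.trans_subset Set.inter_subset_left)
    _ = ENNReal.ofReal (2 * R) ^ (N * n) := by
        simp only [← Set.pi_univ_Icc, volume_pi_pi, Real.volume_Icc]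
        simp [two_mul, pow_mul]

lemma volume_DeltaR_ne_top : volume (DeltaR μ X R N m δ) ≠ ⊤ :=
  ne_top_of_le_ne_top (by finiteness) volume_DeltaR_le

lemma DeltaR_subset_DeltaR (hm : m ≤ m') (hδ : δ' ≤ δ) :
    DeltaR μ X R N m' δ' ⊆ DeltaR μ X R N m δ :=
  fun _ hx => ⟨hx.1, fun k hk hkm idx => (hx.2 k hk (hkm.trans hm) idx).trans_le hδ⟩

lemma volume_DeltaR_pos (hR : n ≠ 0 → 0 < R) (hne : (DeltaR μ X R N m δ).Nonempty) :
    0 < volume (DeltaR μ X R N m δ) := by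
  rw [DeltaR_eq_Icc_inter] at hne ⊢
  refine measure_inter_pos_of_convex (convex_Icc _ _) ⟨0, ?_⟩ isOpen_momentNeighborhood hne
  rw [mem_interior_iff_mem_nhds, ← Set.pi_univ_Icc]
  refine set_pi_mem_nhds Set.finite_univ fun i _ => ?_
  have hRpos : 0 < R := hR i.pos.ne'
  exact pi_Icc_mem_nhds (fun _ => neg_lt_zero.2 hRpos) fun _ => hRpos

lemma ae_eventually_mem_DeltaR [IsProbabilityMeasure μ] (hX : ∀ i, AEMeasurable (X i) μ)
    (hbdd : ∀ i, ∀ᵐ ω ∂μ, |X i ω| ≤ R) (hδ : 0 < δ) :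
    ∀ᵐ ω ∂Measure.infinitePi (fun _ : ℕ => μ), ∀ᶠ N : ℕ in atTop,
      (fun i (j : Fin N) => X i (ω j)) ∈ DeltaR μ X R N m δ := by
  have hcube : ∀ᵐ ω ∂Measure.infinitePi (fun _ : ℕ => μ), ∀ j i, |X i (ω j)| ≤ R :=
    ae_all_iff.2 fun j =>
      (measurePreserving_eval_infinitePi (fun _ : ℕ => μ) j).quasiMeasurePreserving.ae
        (ae_all_iff.2 hbdd)
  have hmean : ∀ᵐ ω ∂Measure.infinitePi (fun _ : ℕ => μ), ∀ (k : ℕ) (idx : Fin k → Fin n),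
      Tendsto (fun N : ℕ => (∑ j ∈ Finset.range N, ∏ l, X (idx l) (ω j)) / N) atTop
        (𝓝 (∫ x, ∏ l, X (idx l) x ∂μ)) :=
    ae_all_iff.2 fun k => ae_all_iff.2 fun idx => ae_tendsto_average_infinitePi
      (integrable_fintype_prod_of_ae_abs_le (fun l => hX (idx l)) fun l => hbdd (idx l))
  filter_upwards [hcube, hmean] with ω hω hlim
  have hclose : ∀ᶠ N : ℕ in atTop, ∀ k ∈ Finset.Icc 1 m, ∀ idx : Fin k → Fin n,
      |(∑ j ∈ Finset.range N, ∏ l, X (idx l) (ω j)) / N - ∫ x, ∏ l, X (idx l) x ∂μ| < δ :=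
    (Finset.eventually_all _).2 fun k _ => eventually_all.2 fun idx =>
      (hlim k idx).eventually (Metric.ball_mem_nhds _ hδ)
  filter_upwards [hclose] with N hN
  refine ⟨fun i j => hω j i, fun k hk hkm idx => ?_⟩
  simpa only [kappa, Finset.sum_range] using hN k (Finset.mem_Icc.2 ⟨hk, hkm⟩) idx

lemma eventually_DeltaR_nonempty [IsProbabilityMeasure μ] (hX : ∀ i, AEMeasurable (X i) μ)
    (hbdd : ∀ i, ∀ᵐ ω ∂μ, |X i ω| ≤ R) (m : ℕ) (hδ : 0 < δ) :
    ∀ᶠ N : ℕ in atTop, (DeltaR μ X R N m δ).Nonempty := by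
  obtain ⟨ω, hω⟩ := (ae_eventually_mem_DeltaR (m := m) hX hbdd hδ).exists
  exact hω.mono fun N hN => ⟨_, hN⟩

/-- The micro-states of a single variable `Y`, as vectors in `ℝ^N` rather than as the
`Fin 1`-indexed tuples of `DeltaR`, so that permutations act on them. -/
def singleMicrostates (μ : Measure Ω) (Y : Ω → ℝ) (R : ℝ) (N m : ℕ) (δ : ℝ) : Set (Fin N → ℝ) :=
  {y | (fun _ : Fin 1 => y) ∈ DeltaR μ (fun _ : Fin 1 => Y) R N m δ}

lemma volume_singleMicrostates (Y : Ω → ℝ) :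
    volume (singleMicrostates μ Y R N m δ) = volume (DeltaR μ (fun _ : Fin 1 => Y) R N m δ) :=
  (volume_preserving_funUnique (Fin 1) (Fin N → ℝ)).symm.measure_preimage_equiv _

lemma measurableSet_singleMicrostates (Y : Ω → ℝ) :
    MeasurableSet (singleMicrostates μ Y R N m δ) :=
  measurableSet_DeltaR.preimage (by fun_prop)

lemma permInvariant_singleMicrostates (Y : Ω → ℝ) :
    PermInvariant (singleMicrostates μ Y R N m δ) := by
  refine fun σ y hy => ⟨fun i j => hy.1 i (σ j), fun k hk hkm idx => ?_⟩
  have hkappa : kappa (fun j => ∏ _l : Fin k, (y ∘ σ) j) = kappa (fun j => ∏ _l : Fin k, y j) :=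
    congrArg (· / (N : ℝ)) (Equiv.sum_comp σ fun j => ∏ _l : Fin k, y j)
  exact hkappa ▸ hy.2 k hk hkm idx

lemma DeltaR_subset_pi_singleMicrostates :
    DeltaR μ X R N m δ ⊆ Set.univ.pi fun i => singleMicrostates μ (X i) R N m δ :=
  fun _ hx i _ => ⟨fun _ j => hx.1 i j, fun k hk hkm _ => hx.2 k hk hkm fun _ => i⟩

lemma volume_DeltaR_le_card_DeltaSymR_mul :
    volume (DeltaR μ X R N m δ) ≤ Nat.card (DeltaSymR μ X R N m δ) *
      ∏ i, (volume (DeltaR μ (fun _ : Fin 1 => X i) R N m δ) / N.factorial) := by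
  simp only [← volume_singleMicrostates]
  exact volume_le_card_sortingPerms_mul DeltaR_subset_pi_singleMicrostates
    (fun i => measurableSet_singleMicrostates (X i)) fun i => permInvariant_singleMicrostates (X i)

lemma toReal_volume_DeltaR_le :
    (volume (DeltaR μ X R N m δ)).toReal ≤
      (∏ i, (volume (DeltaR μ (fun _ : Fin 1 => X i) R N m δ)).toReal) *
        (Nat.card (DeltaSymR μ X R N m δ) / (N.factorial : ℝ) ^ n) := by
  have hfactorial : (N.factorial : ℝ≥0∞) ≠ 0 := by simp [N.factorial_ne_zero]
  have htop : ∀ i, volume (DeltaR μ (fun _ : Fin 1 => X i) R N m δ) / N.factorial ≠ ⊤ := fun i =>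
    ENNReal.div_ne_top volume_DeltaR_ne_top hfactorial
  have hle := ENNReal.toReal_mono
    (ENNReal.mul_ne_top (ENNReal.natCast_ne_top _) (ENNReal.prod_ne_top fun i _ => htop i))
    (volume_DeltaR_le_card_DeltaSymR_mul (μ := μ) (X := X) (R := R) (m := m) (δ := δ))
  simp only [ENNReal.toReal_mul, ENNReal.toReal_prod, ENNReal.toReal_div, ENNReal.toReal_natCast,
    Finset.prod_div_distrib, Finset.prod_const, Finset.card_univ, Fintype.card_fin] at hle
  exact hle.trans_eq (by ring)

lemma DeltaSymR_nonempty (h : (DeltaR μ X R N m δ).Nonempty) :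
    (DeltaSymR μ X R N m δ).Nonempty :=
  h.imp' _ fun _ => sort_mem_sortingPerms

lemma DeltaSymR_subset_DeltaSymR (hm : m ≤ m') (hδ : δ' ≤ δ) :
    DeltaSymR μ X R N m' δ' ⊆ DeltaSymR μ X R N m δ :=
  sortingPerms_mono (DeltaR_subset_DeltaR hm hδ)

end Microstates

section Rates

variable {Ω : Type*} [MeasurableSpace Ω] {μ : Measure Ω} {n N m m' : ℕ} {X : Fin n → Ω → ℝ}
  {R δ δ' : ℝ}

-- `log⁺` rather than `log`: an empty `DeltaR` has `volQ = 0`, because `Real.log 0 = 0`.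
lemma volQ_le (X : Fin n → Ω → ℝ) : volQ μ X R N m δ ≤ n * Real.posLog (2 * R) := by
  have hvol : (volume (DeltaR μ X R N m δ)).toReal ≤ |2 * R| ^ (N * n) := by
    refine (ENNReal.toReal_mono (by finiteness) volume_DeltaR_le).trans ?_
    rw [ENNReal.toReal_pow, ENNReal.toReal_ofReal']
    gcongr
    exact max_le (le_abs_self _) (abs_nonneg _)
  refine div_le_of_le_mul₀ N.cast_nonneg (by positivity [Real.posLog_nonneg (x := 2 * R)]) ?_
  calc Real.log (volume (DeltaR μ X R N m δ)).toReal
      ≤ Real.posLog (volume (DeltaR μ X R N m δ)).toReal := le_max_right _ _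
    _ ≤ Real.posLog (|2 * R| ^ (N * n)) := Real.posLog_le_posLog ENNReal.toReal_nonneg hvol
    _ = n * Real.posLog (2 * R) * N := by
      rw [Real.posLog_pow, Real.posLog_abs]
      push_cast
      ring

lemma symQ_nonpos (X : Fin n → Ω → ℝ) : symQ μ X R N m δ ≤ 0 := by
  have hcard : Nat.card (DeltaSymR μ X R N m δ) ≤ N.factorial ^ n := by
    simpa [Nat.card_eq_fintype_card, Fintype.card_perm] using
      Nat.card_mono Set.finite_univ (Set.subset_univ (DeltaSymR μ X R N m δ))
  refine div_nonpos_of_nonpos_of_nonneg (Real.log_nonpos (by positivity) ?_) N.cast_nonneg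
  exact div_le_one_of_le₀ (mod_cast hcard) (by positivity)

lemma volQ_le_volQ (hm : m ≤ m') (hδ : δ' ≤ δ) (hpos : 0 < volume (DeltaR μ X R N m' δ')) :
    volQ μ X R N m' δ' ≤ volQ μ X R N m δ := by
  unfold volQ
  gcongr
  · exact ENNReal.toReal_pos hpos.ne' volume_DeltaR_ne_top
  · exact volume_DeltaR_ne_top
  · exact DeltaR_subset_DeltaR hm hδ

lemma symQ_le_symQ (hm : m ≤ m') (hδ : δ' ≤ δ) (hne : (DeltaR μ X R N m' δ').Nonempty) :
    symQ μ X R N m' δ' ≤ symQ μ X R N m δ := by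
  have : Nonempty (DeltaSymR μ X R N m' δ') := (DeltaSymR_nonempty hne).to_subtype
  have hpos : 0 < Nat.card (DeltaSymR μ X R N m' δ') := Nat.card_pos
  have hle := Nat.card_mono (Set.toFinite _) (DeltaSymR_subset_DeltaSymR (μ := μ) (X := X)
    (R := R) (N := N) hm hδ)
  unfold symQ
  gcongr

lemma volQ_le_sum_volQ_add_symQ (hpos : 0 < volume (DeltaR μ X R N m δ)) :
    volQ μ X R N m δ ≤ ∑ i, volQ μ (fun _ : Fin 1 => X i) R N m δ + symQ μ X R N m δ := by
  have hle := toReal_volume_DeltaR_le (μ := μ) (X := X) (R := R) (N := N) (m := m) (δ := δ)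
  have hreal : 0 < (volume (DeltaR μ X R N m δ)).toReal :=
    ENNReal.toReal_pos hpos.ne' volume_DeltaR_ne_top
  obtain ⟨hprod, hsym⟩ := mul_ne_zero_iff.1 (hreal.trans_le hle).ne'
  have hlog := Real.log_le_log hreal hle
  rw [Real.log_mul hprod hsym, Real.log_prod (Finset.prod_ne_zero_iff.1 hprod)] at hlog
  unfold volQ symQ
  rw [← Finset.sum_div, ← add_div]
  gcongr

/-- The pairs `(m, δ)` with `0 < δ`, directed so that `m → ∞` and `δ → 0` along `atTop`. -/
abbrev Precision : Type := ℕ × (Set.Ioi (0 : ℝ))ᵒᵈ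

lemma iInf_precision (f : ℕ → ℝ → EReal) :
    ⨅ (m : ℕ) (δ : ℝ) (_ : 0 < δ), f m δ = ⨅ p : Precision, f p.1 p.2.ofDual := by
  rw [iInf_prod]
  exact iInf_congr fun m => iInf_subtype'

/-- The upper exponential growth rate in `N` of the micro-state volume,
`limsup_N (1/N) log λ_N^{⊗n}(Δ_R(X₁,…,Xₙ;N,m,δ))`. -/
noncomputable def upperVolumeRate (μ : Measure Ω) (X : Fin n → Ω → ℝ) (R : ℝ) (m : ℕ) (δ : ℝ) :
    EReal :=
  limsup (fun N : ℕ => (volQ μ X R N m δ : EReal)) atTop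

/-- The lower exponential growth rate in `N` of the micro-state volume,
`liminf_N (1/N) log λ_N^{⊗n}(Δ_R(X₁,…,Xₙ;N,m,δ))`. -/
noncomputable def lowerVolumeRate (μ : Measure Ω) (X : Fin n → Ω → ℝ) (R : ℝ) (m : ℕ) (δ : ℝ) :
    EReal :=
  liminf (fun N : ℕ => (volQ μ X R N m δ : EReal)) atTop

/-- The lower exponential growth rate in `N` of the probability of the permutation micro-states,
`liminf_N (1/N) log γ_{S_N}^{⊗n}(Δ_{sym,R}(X₁,…,Xₙ;N,m,δ))`. -/
noncomputable def lowerSymRate (μ : Measure Ω) (X : Fin n → Ω → ℝ) (R : ℝ) (m : ℕ) (δ : ℝ) :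
    EReal :=
  liminf (fun N : ℕ => (symQ μ X R N m δ : EReal)) atTop

lemma upperVolumeRate_ne_top (X : Fin n → Ω → ℝ) : upperVolumeRate μ X R m δ ≠ ⊤ :=
  ne_top_of_le_ne_top (EReal.coe_ne_top (n * Real.posLog (2 * R))) <|
    limsup_le_of_le (h := .of_forall fun _ => EReal.coe_le_coe_iff.2 (volQ_le X))

lemma lowerSymRate_nonpos (X : Fin n → Ω → ℝ) : lowerSymRate μ X R m δ ≤ 0 :=
  liminf_le_of_frequently_le' (.of_forall fun _ => EReal.coe_nonpos.2 (symQ_nonpos X))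

lemma antitone_upperVolumeRate [IsProbabilityMeasure μ] (hX : ∀ i, AEMeasurable (X i) μ)
    (hR : n ≠ 0 → 0 < R) (hbdd : ∀ i, ∀ᵐ ω ∂μ, |X i ω| ≤ R) :
    Antitone fun p : Precision => upperVolumeRate μ X R p.1 p.2.ofDual := fun p q hpq => by
  refine limsup_le_limsup ?_
  filter_upwards [eventually_DeltaR_nonempty hX hbdd q.1 q.2.ofDual.2] with N hN
  exact EReal.coe_le_coe_iff.2 (volQ_le_volQ hpq.1 hpq.2 (volume_DeltaR_pos hR hN))

lemma antitone_lowerSymRate [IsProbabilityMeasure μ] (hX : ∀ i, AEMeasurable (X i) μ)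
    (hbdd : ∀ i, ∀ᵐ ω ∂μ, |X i ω| ≤ R) :
    Antitone fun p : Precision => lowerSymRate μ X R p.1 p.2.ofDual := fun p q hpq => by
  refine liminf_le_liminf ?_
  filter_upwards [eventually_DeltaR_nonempty hX hbdd q.1 q.2.ofDual.2] with N hN
  exact EReal.coe_le_coe_iff.2 (symQ_le_symQ hpq.1 hpq.2 hN)

lemma lowerVolumeRate_le_sum_add_lowerSymRate [IsProbabilityMeasure μ]
    (hX : ∀ i, AEMeasurable (X i) μ) (hR : n ≠ 0 → 0 < R) (hbdd : ∀ i, ∀ᵐ ω ∂μ, |X i ω| ≤ R)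
    (m : ℕ) (hδ : 0 < δ) :
    lowerVolumeRate μ X R m δ ≤
      ∑ i, upperVolumeRate μ (fun _ : Fin 1 => X i) R m δ + lowerSymRate μ X R m δ := by
  refine le_trans (liminf_le_liminf ?_) (liminf_finset_sum_add_le
    (fun i _ => upperVolumeRate_ne_top fun _ : Fin 1 => X i)
    (ne_top_of_le_ne_top EReal.zero_ne_top (lowerSymRate_nonpos X)))
  filter_upwards [eventually_DeltaR_nonempty hX hbdd m hδ] with N hN
  rw [← ereal_coe_finset_sum, ← EReal.coe_add]
  exact EReal.coe_le_coe_iff.2 (volQ_le_sum_volQ_add_symQ (volume_DeltaR_pos hR hN))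

theorem iInf_lowerVolumeRate_le_sum_sub_IsymUpper [IsProbabilityMeasure μ]
    (hX : ∀ i, AEMeasurable (X i) μ) (hR : n ≠ 0 → 0 < R) (hbdd : ∀ i, ∀ᵐ ω ∂μ, |X i ω| ≤ R) :
    ⨅ (m : ℕ) (δ : ℝ) (_ : 0 < δ), lowerVolumeRate μ X R m δ ≤
      ∑ i, (⨅ (m : ℕ) (δ : ℝ) (_ : 0 < δ), upperVolumeRate μ (fun _ : Fin 1 => X i) R m δ)
        - IsymUpper μ X R := by
  have hvol_anti (i : Fin n) :=
    antitone_upperVolumeRate (X := fun _ : Fin 1 => X i) (fun _ => hX i) (fun _ => hR i.pos.ne')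
      fun _ => hbdd i
  let p₀ : Precision := (0, .toDual ⟨1, Set.mem_Ioi.2 one_pos⟩)
  have hIsym : IsymUpper μ X R = -⨅ (m : ℕ) (δ : ℝ) (_ : 0 < δ), lowerSymRate μ X R m δ := rfl
  rw [hIsym, sub_eq_add_neg, neg_neg]
  simp only [iInf_precision]
  calc ⨅ p : Precision, lowerVolumeRate μ X R p.1 p.2.ofDual
      ≤ ⨅ p : Precision, (∑ i, upperVolumeRate μ (fun _ : Fin 1 => X i) R p.1 p.2.ofDual
          + lowerSymRate μ X R p.1 p.2.ofDual) :=
        iInf_mono fun p => lowerVolumeRate_le_sum_add_lowerSymRate hX hR hbdd p.1 p.2.ofDual.2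
    _ ≤ _ := iInf_finset_sum_add_le_of_antitone hvol_anti (antitone_lowerSymRate hX hbdd)
        (fun i _ => ne_top_of_le_ne_top (upperVolumeRate_ne_top _) (iInf_le _ p₀))
        (ne_top_of_le_ne_top EReal.zero_ne_top ((iInf_le _ p₀).trans (lowerSymRate_nonpos X)))

end Rates

/-- Inequality (1.3): `H(X₁,…,Xₙ) ≤ ∑ᵢ H(Xᵢ) - Ī_sym(X₁,…,Xₙ)` for bounded
random variables and `R ≥ maxᵢ ‖Xᵢ‖_∞`. -/
theorem stmt8 {Ω : Type*} [MeasurableSpace Ω] (μ : Measure Ω)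
    [IsProbabilityMeasure μ] (n : ℕ) (X : Fin n → Ω → ℝ)
    (hmeas : ∀ i, Measurable (X i)) (R : ℝ)
    (hbdd : ∀ i, ∀ᵐ ω ∂μ, |X i ω| ≤ R)
    (hvol : MicrostateVolumeFormula μ X R)
    (hvoli : ∀ i, MicrostateVolumeFormula μ (fun _ : Fin 1 => X i) R) :
    diffEntropy volume (Measure.map (fun ω (i : Fin n) => X i ω) μ)
      ≤ (∑ i, diffEntropy volume
            (Measure.map (fun ω (_ : Fin 1) => X i ω) μ))
          - IsymUpper μ X R := by
  by_cases hac : Measure.map (fun ω i => X i ω) μ ≪ volume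
  · have hR : n ≠ 0 → 0 < R := fun hn =>
      have : NeZero n := ⟨hn⟩
      pos_of_map_absolutelyContinuous hbdd hac
    rw [hvol.2]
    simp only [(hvoli _).1]
    exact iInf_lowerVolumeRate_le_sum_sub_IsymUpper (fun i => (hmeas i).aemeasurable) hR hbdd
  · rw [diffEntropy, if_neg hac]
    exact bot_le
end
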